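/- Let H₀ be self-adjoint in the complex separable Hilbert space H, Ω ⊆ ℝ an open interval, and {V(s)}_{s∈Ω} ⊂ B₁(H) a family of nonnegative trace class operators, V(s) = K(s)K(s)* with K(s) ∈ B₂(H), which is continuously differentiable in s in trace norm; set H(s) = H₀ + V(s) with dom(H(s)) = dom(H₀) and Φ(z,s) = I_H + K(s)*(H₀ − z)⁻¹K(s). Then for all s ∈ Ω and z ∈ ℂ∖ℝ, (d/ds) tr_H(log(Φ(z,s))) = tr_H(V'(s)(H(s) − z)⁻¹), where V'(s) denotes the trace-norm derivative of V(s). -/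

import Mathlib

open Complex Filter MeasureTheory TopologicalSpace ContinuousLinearMap
open scoped InnerProductSpace Topology

noncomputable section

namespace SpectralShift

variable {H : Type*} [NormedAddCommGroup H] [InnerProductSpace ℂ H] [CompleteSpace H]

/-- The imaginary part `(T - T*)/(2i)` of a bounded operator. -/
def imPart (T : H →L[ℂ] H) : H →L[ℂ] H :=
  ((2 * Complex.I)⁻¹ : ℂ) • (T - ContinuousLinearMap.adjoint T)

/-- An operator-valued Herglotz function: analytic on the open upper half-plane with
nonnegative imaginary part there. -/
def IsHerglotz (M : ℂ → H →L[ℂ] H) : Prop :=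
  DifferentiableOn ℂ M {z : ℂ | 0 < z.im} ∧ ∀ z : ℂ, 0 < z.im → (imPart (M z)).IsPositive

/-- The integrand `(T + iλ)⁻¹ - (1 + iλ)⁻¹ I` in the integral representation of `log T`. -/
def logIntegrand (T : H →L[ℂ] H) (t : ℝ) : H →L[ℂ] H :=
  Ring.inverse (T + ((t : ℂ) * Complex.I) • (1 : H →L[ℂ] H)) -
    (((1 : ℂ) + (t : ℂ) * Complex.I)⁻¹) • (1 : H →L[ℂ] H)

/-- `log T = -i ∫₀^∞ ((T + iλ)⁻¹ - (1 + iλ)⁻¹ I) dλ` as a norm-convergent improper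
Riemann integral, for a dissipative boundedly invertible `T`. -/
def opLog (T : H →L[ℂ] H) : H →L[ℂ] H :=
  limUnder atTop (fun R : ℝ => (-Complex.I) • ∫ t in (0:ℝ)..R, logIntegrand T t)

/-- The logarithm `log S = (log S*)*` of an operator `S` with `-S` dissipative. -/
def opLogAnti (T : H →L[ℂ] H) : H →L[ℂ] H :=
  ContinuousLinearMap.adjoint (opLog (ContinuousLinearMap.adjoint T))

/-- The logarithm of a Herglotz-type operator family on `ℂ ∖ ℝ`, using `log T` in the
upper half-plane and the convention `log S = (log S*)*` in the lower half-plane. -/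
def logHerg (Φ : ℂ → H →L[ℂ] H) (z : ℂ) : H →L[ℂ] H :=
  if 0 < z.im then opLog (Φ z) else opLogAnti (Φ z)

/-- The logarithm of an anti-Herglotz-type operator family on `ℂ ∖ ℝ` (nonpositive
imaginary part in the upper half-plane). -/
def logAntiHerg (Φ : ℂ → H →L[ℂ] H) (z : ℂ) : H →L[ℂ] H :=
  if 0 < z.im then opLogAnti (Φ z) else opLog (Φ z)

/-- Trace class: absolute summability of the diagonal in every Hilbert basis. -/
def IsTraceClass (T : H →L[ℂ] H) : Prop :=
  ∀ (w : Set H) (b : HilbertBasis w ℂ H), Summable fun i => ‖⟪(b i : H), T (b i)⟫_ℂ‖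

/-- The trace, computed in a fixed Hilbert basis (basis-independent for trace
class operators). -/
def trH (T : H →L[ℂ] H) : ℂ :=
  ∑' i, ⟪((exists_hilbertBasis ℂ H).choose_spec.choose i : H),
    T ((exists_hilbertBasis ℂ H).choose_spec.choose i)⟫_ℂ

/-- The trace norm, via duality with bounded operators (the correct value for trace
class operators). -/
def traceNorm (T : H →L[ℂ] H) : ℝ :=
  ⨆ B : {B : H →L[ℂ] H // ‖B‖ ≤ 1}, ‖trH (T * (B : H →L[ℂ] H))‖

/-- Hilbert-Schmidt operators. -/
def IsHilbertSchmidt (K : H →L[ℂ] H) : Prop :=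
  ∀ (w : Set H) (b : HilbertBasis w ℂ H), Summable fun i => ‖K (b i)‖ ^ 2

/-- A (possibly unbounded) self-adjoint operator in `H`: a densely defined symmetric
operator possessing everywhere-defined bounded resolvents at every non-real point. -/
structure SelfAdjointOp (H : Type*) [NormedAddCommGroup H] [InnerProductSpace ℂ H]
    [CompleteSpace H] where
  dom : Submodule ℂ H
  dense_dom : Dense (dom : Set H)
  op : dom →ₗ[ℂ] H
  symmetric : ∀ x y : dom, ⟪op x, (y : H)⟫_ℂ = ⟪(x : H), op y⟫_ℂ
  resolvent : ℂ → H →L[ℂ] H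
  resolvent_mem : ∀ {z : ℂ}, z.im ≠ 0 → ∀ x : H, resolvent z x ∈ dom
  op_resolvent : ∀ {z : ℂ} (hz : z.im ≠ 0) (x : H),
    op ⟨resolvent z x, resolvent_mem hz x⟩ - z • resolvent z x = x
  resolvent_op : ∀ {z : ℂ} (hz : z.im ≠ 0) (x : dom),
    resolvent z (op x - z • (x : H)) = x

/-- `B = A + V` for a bounded operator `V` (with `dom B = dom A`). -/
def IsSumOf (B A : SelfAdjointOp H) (V : H →L[ℂ] H) : Prop :=
  B.dom = A.dom ∧ ∀ (x : H) (hxB : x ∈ B.dom) (hxA : x ∈ A.dom),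
    B.op ⟨x, hxB⟩ = A.op ⟨x, hxA⟩ + V x

/-- `R` is the (bounded, everywhere defined) resolvent `(A - z)⁻¹` of `A` at `z`. -/
def SelfAdjointOp.IsResolventAt (A : SelfAdjointOp H) (z : ℂ) (R : H →L[ℂ] H) : Prop :=
  (∀ x : H, R x ∈ A.dom) ∧
  (∀ (x : H) (hx : R x ∈ A.dom), A.op ⟨R x, hx⟩ - z • R x = x) ∧
  (∀ x : A.dom, R (A.op x - z • (x : H)) = x)

/-- `E` is the projection-valued spectral measure of the self-adjoint operator `A`. -/
def IsSpectralMeasure (A : SelfAdjointOp H) (E : Set ℝ → H →L[ℂ] H) : Prop :=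
  (∀ B : Set ℝ, MeasurableSet B → IsSelfAdjoint (E B)) ∧
  (∀ B C : Set ℝ, MeasurableSet B → MeasurableSet C → E B * E C = E (B ∩ C)) ∧
  (E Set.univ = 1) ∧
  (∀ (f : ℕ → Set ℝ), (∀ n, MeasurableSet (f n)) → Pairwise (Function.onFun Disjoint f) →
    ∀ x : H, HasSum (fun n => E (f n) x) (E (⋃ n, f n) x)) ∧
  ∃ μ : H → Measure ℝ,
    (∀ (f : H) (B : Set ℝ), MeasurableSet B → μ f B = ENNReal.ofReal (⟪f, E B f⟫_ℂ).re) ∧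
    ∀ (z : ℂ), z.im ≠ 0 → ∀ f : H,
      ⟪f, A.resolvent z f⟫_ℂ = ∫ l : ℝ, ((l : ℂ) - z)⁻¹ ∂(μ f)

/-- Invertibility of `T` restricted to the range of the orthogonal projection `P`
(for `T` commuting with `P`), with inverse `S` supported in `ran P`. -/
def InvertibleOn (T P : H →L[ℂ] H) : Prop :=
  ∃ S : H →L[ℂ] H, S * P = S ∧ P * S = S ∧ S * (T * P) = P ∧ (P * T) * S = P

/-- The spectral projection `J₊ = (I + J)/2` onto `H₊` for a self-adjoint unitary `J`. -/
def Jplus (J : H →L[ℂ] H) : H →L[ℂ] H := ((2 : ℂ)⁻¹) • (1 + J)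

/-- The spectral projection `J₋ = (I - J)/2` onto `H₋` for a self-adjoint unitary `J`. -/
def Jminus (J : H →L[ℂ] H) : H →L[ℂ] H := ((2 : ℂ)⁻¹) • (1 - J)

/-- `Φ₊(z) = I + J₊ K* (H₀ - z)⁻¹ K J₊`, the operator on `H` inducing `Φ₊(z)` on `H₊`
(and the identity on `H₋`). -/
def PhiPlus (H0 : SelfAdjointOp H) (J K : H →L[ℂ] H) (z : ℂ) : H →L[ℂ] H :=
  1 + Jplus J * (ContinuousLinearMap.adjoint K * H0.resolvent z * K) * Jplus J

/-- `Φ̃₋(z) = I - J₋ K* (H₊ - z)⁻¹ K J₋`, the operator on `H` inducing `Φ̃₋(z)` on `H₋`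
(and the identity on `H₊`). -/
def PhiMinusT (Hp : SelfAdjointOp H) (J K : H →L[ℂ] H) (z : ℂ) : H →L[ℂ] H :=
  1 - Jminus J * (ContinuousLinearMap.adjoint K * Hp.resolvent z * K) * Jminus J

/-!
Write `Φ = 1 + A B` with `A = K*` and `B = (H₀ - z)⁻¹ K`, and let `C = B A = (H₀ - z)⁻¹ V`. The
resolvent integral for the logarithm gives `log (1 + A B) = A L(1, 1 + C) B`, where
`L(S, T) = i ∫₀^∞ (S + it)⁻¹ (T + it)⁻¹ dt` is the divided difference of `log`. By cyclicity
`tr log Φ = tr (C L(1, 1 + C))`, a function of `C` alone, and the resolvent identity under the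
integral sign turns the difference of two such traces into `tr ((C₂ - C₁) L(1 + C₁, 1 + C₂))`.
As `C₂ → C₁` the divided difference tends in norm to `L(1 + C₁, 1 + C₁) = (1 + C₁)⁻¹`, so the
derivative is `tr (C' (1 + C)⁻¹) = tr (V' (1 + (H₀ - z)⁻¹ V)⁻¹ (H₀ - z)⁻¹) = tr (V' (H(s) - z)⁻¹)`
in the upper half-plane; the lower one follows by taking adjoints.

The trace class theory rests on writing every trace class operator as a finite sum of products of
two Hilbert–Schmidt operators, through the square roots of the positive and negative parts of its
real and imaginary parts.
-/

/-! ### Hilbert–Schmidt operators -/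

section HilbertBasis

variable {𝕜 E F ι ι' : Type*} [RCLike 𝕜] [NormedAddCommGroup E] [InnerProductSpace 𝕜 E]
  [NormedAddCommGroup F] [InnerProductSpace 𝕜 F]

lemma hasSum_sq_norm_inner (b : HilbertBasis ι 𝕜 E) (x : E) :
    HasSum (fun i => ‖⟪b i, x⟫_𝕜‖ ^ 2) (‖x‖ ^ 2) := by
  have h := (b.hasSum_inner_mul_inner x x).mapL (RCLike.reCLM (K := 𝕜))
  simpa only [RCLike.reCLM_apply, inner_self_eq_norm_sq, inner_mul_symm_re_eq_norm,
    norm_mul, norm_inner_symm x, ← sq] using h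

lemma summable_sq_norm_inner_prod (b : HilbertBasis ι 𝕜 E) (b' : HilbertBasis ι' 𝕜 F)
    {A : E →L[𝕜] F} (h : Summable fun i => ‖A (b i)‖ ^ 2) :
    Summable fun p : ι × ι' => ‖⟪b' p.2, A (b p.1)⟫_𝕜‖ ^ 2 := by
  refine (summable_prod_of_nonneg fun p => sq_nonneg _).2
    ⟨fun i => (hasSum_sq_norm_inner b' (A (b i))).summable, ?_⟩
  simpa only [(hasSum_sq_norm_inner b' _).tsum_eq] using h

lemma summable_sq_norm_adjoint [CompleteSpace E] [CompleteSpace F] (b : HilbertBasis ι 𝕜 E)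
    (b' : HilbertBasis ι' 𝕜 F) {A : E →L[𝕜] F} (h : Summable fun i => ‖A (b i)‖ ^ 2) :
    Summable fun j => ‖adjoint A (b' j)‖ ^ 2 := by
  have hprod := (summable_sq_norm_inner_prod b b' h).prod_symm
  have hcol := ((summable_prod_of_nonneg fun p => sq_nonneg _).1 hprod).2
  refine hcol.congr fun j => ?_
  rw [← (hasSum_sq_norm_inner b (adjoint A (b' j))).tsum_eq]
  simp only [Prod.fst_swap, Prod.snd_swap, adjoint_inner_right, norm_inner_symm]

lemma exists_hilbertBasis_mem_or_mem_orthogonal [CompleteSpace E] (N : Submodule 𝕜 E)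
    [CompleteSpace N] :
    ∃ (w : Set E) (b : HilbertBasis w 𝕜 E), ∀ i, b i ∈ N ∨ b i ∈ Nᗮ := by
  obtain ⟨w₀, b₀, _⟩ := exists_hilbertBasis 𝕜 N
  have hort : Orthonormal 𝕜 fun i => (b₀ i : E) :=
    b₀.orthonormal.comp_linearIsometry N.subtypeₗᵢ
  obtain ⟨w, b, hsub, hb⟩ := hort.toSubtypeRange.exists_hilbertBasis_extension
  refine ⟨w, b, fun i => or_iff_not_imp_left.2 fun hi => ?_⟩
  rw [← N.orthogonalProjectionOnto_eq_zero_iff, ← b₀.repr.map_eq_zero_iff]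
  ext j
  have hj : (b₀ j : E) ∈ w := hsub (Set.mem_range_self j)
  have hne : (⟨b₀ j, hj⟩ : w) ≠ i := by
    rintro rfl
    exact hi (by rw [hb]; exact (b₀ j).2)
  have hinner := b.orthonormal.2 hne
  rw [hb] at hinner ⊢
  rw [b₀.repr_apply_apply, Submodule.inner_orthogonalProjectionOnto_eq_of_mem_left]
  exact hinner

end HilbertBasis

lemma summable_mul_of_summable_sq {ι : Type*} {f g : ι → ℝ} (hf : Summable fun i => f i ^ 2)
    (hg : Summable fun i => g i ^ 2) : Summable fun i => f i * g i := by
  refine Summable.of_norm_bounded (hf.add hg) fun i => ?_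
  rw [Real.norm_eq_abs, abs_le]
  constructor <;> nlinarith [sq_nonneg (f i - g i), sq_nonneg (f i + g i)]

section

variable {A B K S T : H →L[ℂ] H}

lemma isHilbertSchmidt_of_hilbertBasis {ι : Type*} (b : HilbertBasis ι ℂ H)
    (h : Summable fun i => ‖K (b i)‖ ^ 2) : IsHilbertSchmidt K := fun w c => by
  simpa only [adjoint_adjoint] using
    summable_sq_norm_adjoint b c (summable_sq_norm_adjoint b b h)

namespace IsHilbertSchmidt

lemma adjoint (h : IsHilbertSchmidt K) : IsHilbertSchmidt (adjoint K) := fun w b =>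
  summable_sq_norm_adjoint b b (h w b)

omit [CompleteSpace H] in
lemma mul_left (h : IsHilbertSchmidt K) (N : H →L[ℂ] H) : IsHilbertSchmidt (N * K) := by
  refine fun w b => ((h w b).mul_left (‖N‖ ^ 2)).of_nonneg_of_le (fun i => sq_nonneg _) fun i => ?_
  rw [← mul_pow]
  exact pow_le_pow_left₀ (norm_nonneg _) (N.le_opNorm _) 2

lemma mul_right (h : IsHilbertSchmidt K) (N : H →L[ℂ] H) : IsHilbertSchmidt (K * N) := by
  simpa only [← star_eq_adjoint, star_mul, star_star] using
    (h.adjoint.mul_left (ContinuousLinearMap.adjoint N)).adjoint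

omit [CompleteSpace H] in
lemma neg (h : IsHilbertSchmidt K) : IsHilbertSchmidt (-K) := by
  simpa using h.mul_left (-1)

omit [CompleteSpace H] in
lemma smul (h : IsHilbertSchmidt K) (c : ℂ) : IsHilbertSchmidt (c • K) := by
  simpa using h.mul_left (c • 1)

lemma isTraceClass_mul (hA : IsHilbertSchmidt A) (hB : IsHilbertSchmidt B) :
    IsTraceClass (A * B) := by
  refine fun w b => (summable_mul_of_summable_sq (hA.adjoint w b) (hB w b)).of_nonneg_of_le
    (fun i => norm_nonneg _) fun i => ?_
  rw [mul_apply_eq_comp, ← adjoint_inner_left]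
  exact norm_inner_le_norm _ _

end IsHilbertSchmidt

lemma isHilbertSchmidt_of_isTraceClass_mul_adjoint (h : IsTraceClass (K * adjoint K)) :
    IsHilbertSchmidt K := by
  have hadj : IsHilbertSchmidt (adjoint K) := fun w b => (h w b).congr fun i => by
    rw [mul_apply_eq_comp, ← adjoint_inner_left, inner_self_eq_norm_sq_to_K, norm_pow,
      RCLike.norm_ofReal, abs_norm]
  simpa only [adjoint_adjoint] using hadj.adjoint

/-- The Hilbert basis in which `trH` is computed. -/
def traceBasis (H : Type*) [NormedAddCommGroup H] [InnerProductSpace ℂ H] [CompleteSpace H] :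
    HilbertBasis (exists_hilbertBasis ℂ H).choose ℂ H :=
  (exists_hilbertBasis ℂ H).choose_spec.choose

lemma trH_eq_tsum (T : H →L[ℂ] H) : trH T = ∑' i, ⟪traceBasis H i, T (traceBasis H i)⟫_ℂ := rfl

namespace IsHilbertSchmidt

lemma trH_mul_comm (hA : IsHilbertSchmidt A) (hB : IsHilbertSchmidt B) :
    trH (A * B) = trH (B * A) := by
  obtain ⟨w, e, he⟩ : ∃ (w : Set H) (e : HilbertBasis w ℂ H),
      ∀ T, trH T = ∑' i, ⟪e i, T (e i)⟫_ℂ := ⟨_, traceBasis H, trH_eq_tsum⟩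
  have htr (A B : H →L[ℂ] H) : trH (A * B) = ∑' i, ∑' j, ⟪e i, A (e j)⟫_ℂ * ⟪e j, B (e i)⟫_ℂ := by
    refine (he _).trans (tsum_congr fun i => ?_)
    rw [mul_apply_eq_comp, ← adjoint_inner_left, ← e.tsum_inner_mul_inner]
    simp only [adjoint_inner_left]
  have hsum : Summable (Function.uncurry fun i j => ⟪e j, A (e i)⟫_ℂ * ⟪e i, B (e j)⟫_ℂ) := by
    refine .of_norm ((summable_mul_of_summable_sq (summable_sq_norm_inner_prod e e (hA _ e))
      (summable_sq_norm_inner_prod e e (hB _ e)).prod_symm).congr fun p => ?_)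
    rw [Function.uncurry_def, norm_mul, Prod.fst_swap, Prod.snd_swap]
  rw [htr A B, htr B A, hsum.tsum_comm]
  exact tsum_congr fun i => tsum_congr fun j => mul_comm _ _

lemma exists_norm_trH_mul_mul_le (hA : IsHilbertSchmidt A) (hB : IsHilbertSchmidt B) :
    ∃ C, ∀ N : H →L[ℂ] H, ‖trH (A * N * B)‖ ≤ C * ‖N‖ := by
  set e := traceBasis H
  have hsum := summable_mul_of_summable_sq (hA.adjoint _ e) (hB _ e)
  refine ⟨∑' i, ‖ContinuousLinearMap.adjoint A (e i)‖ * ‖B (e i)‖, fun N => ?_⟩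
  rw [trH_eq_tsum]
  refine tsum_of_norm_bounded (hsum.hasSum.mul_right ‖N‖) fun i => ?_
  calc ‖⟪e i, (A * N * B) (e i)⟫_ℂ‖
      = ‖⟪ContinuousLinearMap.adjoint A (e i), N (B (e i))⟫_ℂ‖ := by
        rw [mul_assoc, mul_apply_eq_comp, ← adjoint_inner_left, mul_apply_eq_comp]
    _ ≤ ‖ContinuousLinearMap.adjoint A (e i)‖ * (‖N‖ * ‖B (e i)‖) :=
        (norm_inner_le_norm _ _).trans (mul_le_mul_of_nonneg_left (N.le_opNorm _) (norm_nonneg _))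
    _ = ‖ContinuousLinearMap.adjoint A (e i)‖ * ‖B (e i)‖ * ‖N‖ := by ring

end IsHilbertSchmidt

/-! ### Trace class operators -/

lemma isHilbertSchmidt_sqrt_of_nonneg {ι : Type*} (b : HilbertBasis ι ℂ H) (hT : 0 ≤ T)
    (h : Summable fun i => ‖⟪b i, T (b i)⟫_ℂ‖) : IsHilbertSchmidt (CFC.sqrt T) := by
  have hsa : adjoint (CFC.sqrt T) = CFC.sqrt T := (CFC.sqrt_nonneg T).isSelfAdjoint
  refine isHilbertSchmidt_of_hilbertBasis b (h.congr fun i => ?_)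
  conv_lhs => rw [← CFC.sqrt_mul_sqrt_self T hT]
  rw [mul_apply_eq_comp, ← adjoint_inner_left, hsa, inner_self_eq_norm_sq_to_K, norm_pow,
    RCLike.norm_ofReal, abs_norm]

namespace IsTraceClass

omit [CompleteSpace H] in
lemma add (hS : IsTraceClass S) (hT : IsTraceClass T) : IsTraceClass (S + T) := by
  refine fun w b => ((hS w b).add (hT w b)).of_nonneg_of_le (fun i => norm_nonneg _) fun i => ?_
  rw [_root_.add_apply, inner_add_right]
  exact norm_add_le _ _

omit [CompleteSpace H] in
lemma smul (hT : IsTraceClass T) (c : ℂ) : IsTraceClass (c • T) := fun w b => by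
  simpa only [_root_.smul_apply, inner_smul_right, norm_mul] using (hT w b).mul_left ‖c‖

omit [CompleteSpace H] in
lemma neg (hT : IsTraceClass T) : IsTraceClass (-T) := by simpa using hT.smul (-1)

omit [CompleteSpace H] in
lemma sub (hS : IsTraceClass S) (hT : IsTraceClass T) : IsTraceClass (S - T) := by
  simpa only [sub_eq_add_neg] using hS.add hT.neg

lemma adjoint (hT : IsTraceClass T) : IsTraceClass (adjoint T) := fun w b => by
  simpa only [adjoint_inner_right, norm_inner_symm] using hT w b

/-- In a basis adapted to `ker T⁺`, the diagonal of `T⁺` consists of diagonal entries of `T` and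
zeros. -/
lemma isHilbertSchmidt_sqrt_posPart (hT : IsTraceClass T) (hsa : IsSelfAdjoint T) :
    IsHilbertSchmidt (CFC.sqrt T⁺) := by
  have := (T⁺).isClosed_ker.completeSpace_coe
  obtain ⟨w, b, hb⟩ := exists_hilbertBasis_mem_or_mem_orthogonal (T⁺).ker
  refine isHilbertSchmidt_sqrt_of_nonneg b (CFC.posPart_nonneg T)
    ((hT w b).of_nonneg_of_le (fun i => norm_nonneg _) fun i => ?_)
  rcases hb i with hker | hort
  · rw [show T⁺ (b i) = 0 from hker, inner_zero_right, norm_zero]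
    exact norm_nonneg _
  · have hneg : T⁻ (b i) ∈ (T⁺).ker := DFunLike.congr_fun (CFC.posPart_mul_negPart T) (b i)
    conv_rhs => rw [← CFC.posPart_sub_negPart T hsa, _root_.sub_apply, inner_sub_right,
      (Submodule.mem_orthogonal' _ _).1 hort _ hneg, sub_zero]

theorem induction_on {p : (H →L[ℂ] H) → Prop} (hT : IsTraceClass T)
    (mul : ∀ A B, IsHilbertSchmidt A → IsHilbertSchmidt B → p (A * B))
    (add : ∀ S T, IsTraceClass S → IsTraceClass T → p S → p T → p (S + T)) : p T := by
  have of_isSelfAdjoint {c : ℂ} {S} (hS : IsTraceClass S) (hsa : IsSelfAdjoint S) : p (c • S) := by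
    have hpos := hS.isHilbertSchmidt_sqrt_posPart hsa
    have hneg := hS.neg.isHilbertSchmidt_sqrt_posPart hsa.neg
    rw [CFC.posPart_neg] at hneg
    have hdecomp : c • S =
        (c • CFC.sqrt S⁺) * CFC.sqrt S⁺ + (-(c • CFC.sqrt S⁻)) * CFC.sqrt S⁻ := by
      rw [neg_mul, smul_mul_assoc, smul_mul_assoc, CFC.sqrt_mul_sqrt_self _ (CFC.posPart_nonneg S),
        CFC.sqrt_mul_sqrt_self _ (CFC.negPart_nonneg S), ← sub_eq_add_neg, ← smul_sub,
        CFC.posPart_sub_negPart S hsa]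
    rw [hdecomp]
    exact add _ _ ((hpos.smul c).isTraceClass_mul hpos) ((hneg.smul c).neg.isTraceClass_mul hneg)
      (mul _ _ (hpos.smul c) hpos) (mul _ _ (hneg.smul c).neg hneg)
  have hre : IsTraceClass (realPart T : H →L[ℂ] H) := by
    rw [realPart_apply_coe]
    exact_mod_cast (hT.add hT.adjoint).smul (2⁻¹ : ℝ)
  have him : IsTraceClass (imaginaryPart T : H →L[ℂ] H) := by
    rw [imaginaryPart_apply_coe]
    exact_mod_cast ((hT.sub hT.adjoint).smul (2⁻¹ : ℝ)).smul (-I)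
  rw [← realPart_add_I_smul_imaginaryPart T, ← one_smul ℂ (realPart T : H →L[ℂ] H)]
  exact add _ _ (hre.smul 1) (him.smul I) (of_isSelfAdjoint hre (realPart T).2)
    (of_isSelfAdjoint him (imaginaryPart T).2)

lemma mul_left (hT : IsTraceClass T) (N : H →L[ℂ] H) : IsTraceClass (N * T) :=
  hT.induction_on (p := fun T => IsTraceClass (N * T))
    (fun A B hA hB => mul_assoc N A B ▸ (hA.mul_left N).isTraceClass_mul hB)
    (fun S T _ _ hS hT => mul_add N S T ▸ hS.add hT)

lemma mul_right (hT : IsTraceClass T) (N : H →L[ℂ] H) : IsTraceClass (T * N) := by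
  simpa only [← star_eq_adjoint, star_mul, star_star] using
    (hT.adjoint.mul_left (ContinuousLinearMap.adjoint N)).adjoint

end IsTraceClass

lemma trH_add (hS : IsTraceClass S) (hT : IsTraceClass T) : trH (S + T) = trH S + trH T := by
  simp only [trH_eq_tsum, _root_.add_apply, inner_add_right]
  exact (hS _ _).of_norm.tsum_add (hT _ _).of_norm

lemma trH_smul (c : ℂ) (T : H →L[ℂ] H) : trH (c • T) = c * trH T := by
  simp only [trH_eq_tsum, _root_.smul_apply, inner_smul_right, tsum_mul_left]

lemma trH_neg (T : H →L[ℂ] H) : trH (-T) = -trH T := by simpa using trH_smul (-1) T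

lemma trH_sub (hS : IsTraceClass S) (hT : IsTraceClass T) : trH (S - T) = trH S - trH T := by
  rw [sub_eq_add_neg, trH_add hS hT.neg, trH_neg, ← sub_eq_add_neg]

lemma trH_adjoint (T : H →L[ℂ] H) : trH (adjoint T) = starRingEnd ℂ (trH T) := by
  simp only [trH_eq_tsum, Complex.conj_tsum, adjoint_inner_right, inner_conj_symm]

namespace IsTraceClass

lemma trH_mul_comm (hT : IsTraceClass T) (N : H →L[ℂ] H) : trH (T * N) = trH (N * T) := by
  refine hT.induction_on (p := fun T => trH (T * N) = trH (N * T)) (fun A B hA hB => ?_)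
    fun S T hS hT ihS ihT => ?_
  · rw [mul_assoc, hA.trH_mul_comm (hB.mul_right N), mul_assoc, hB.trH_mul_comm (hA.mul_left N),
      mul_assoc]
  · rw [add_mul, mul_add, trH_add (hS.mul_right N) (hT.mul_right N),
      trH_add (hS.mul_left N) (hT.mul_left N), ihS, ihT]

lemma exists_norm_trH_mul_le (hT : IsTraceClass T) :
    ∃ C, ∀ N : H →L[ℂ] H, ‖trH (T * N)‖ ≤ C * ‖N‖ := by
  refine hT.induction_on (p := fun T => ∃ C, ∀ N : H →L[ℂ] H, ‖trH (T * N)‖ ≤ C * ‖N‖)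
    (fun A B hA hB => ?_) ?_
  · obtain ⟨C, hC⟩ := hB.exists_norm_trH_mul_mul_le hA
    refine ⟨C, fun N => ?_⟩
    rw [mul_assoc, hA.trH_mul_comm (hB.mul_right N)]
    exact hC N
  · rintro S T hS hT ⟨C, hC⟩ ⟨D, hD⟩
    refine ⟨C + D, fun N => ?_⟩
    rw [add_mul, add_mul, trH_add (hS.mul_right N) (hT.mul_right N)]
    exact norm_add_le_of_le (hC N) (hD N)

/-- The bounded linear functional `N ↦ tr (T N)` of a trace class operator `T`. -/
def traceFunctional (hT : IsTraceClass T) : (H →L[ℂ] H) →L[ℂ] ℂ :=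
  LinearMap.mkContinuousOfExistsBound
    { toFun := fun N => trH (T * N)
      map_add' := fun M N => by rw [mul_add, trH_add (hT.mul_right M) (hT.mul_right N)]
      map_smul' := fun c N => by rw [mul_smul_comm, trH_smul, RingHom.id_apply, smul_eq_mul] }
    hT.exists_norm_trH_mul_le

@[simp]
lemma traceFunctional_apply (hT : IsTraceClass T) (N : H →L[ℂ] H) :
    hT.traceFunctional N = trH (T * N) := rfl

end IsTraceClass

/-! ### The trace norm -/

lemma traceNorm_nonneg (T : H →L[ℂ] H) : 0 ≤ traceNorm T :=
  Real.iSup_nonneg fun _ => norm_nonneg _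

namespace IsTraceClass

lemma norm_trH_mul_le (hT : IsTraceClass T) (N : H →L[ℂ] H) :
    ‖trH (T * N)‖ ≤ traceNorm T * ‖N‖ := by
  have hbdd : BddAbove (Set.range fun B : {B : H →L[ℂ] H // ‖B‖ ≤ 1} => ‖trH (T * B.1)‖) := by
    refine ⟨‖hT.traceFunctional‖, ?_⟩
    rintro _ ⟨B, rfl⟩
    exact hT.traceFunctional.unit_le_opNorm B.1 B.2
  refine le_trans (hT.traceFunctional.le_opNorm N) ?_
  gcongr
  refine hT.traceFunctional.opNorm_le_of_unit_norm (traceNorm_nonneg T) fun B hB => ?_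
  exact le_ciSup hbdd ⟨B, hB.le⟩

lemma traceNorm_mul_le (hT : IsTraceClass T) (N : H →L[ℂ] H) :
    traceNorm (N * T) ≤ ‖N‖ * traceNorm T := by
  refine Real.iSup_le (fun B => ?_) (mul_nonneg (norm_nonneg N) (traceNorm_nonneg T))
  calc ‖trH (N * T * B.1)‖ = ‖trH (T * (B.1 * N))‖ := by
        rw [mul_assoc, ← (hT.mul_right B.1).trH_mul_comm, mul_assoc]
    _ ≤ traceNorm T * (‖B.1‖ * ‖N‖) :=
        (hT.norm_trH_mul_le _).trans
          (mul_le_mul_of_nonneg_left (norm_mul_le _ _) (traceNorm_nonneg T))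
    _ ≤ traceNorm T * (1 * ‖N‖) := by
        gcongr
        · exact traceNorm_nonneg T
        · exact B.2
    _ = ‖N‖ * traceNorm T := by ring

lemma norm_le_traceNorm (hT : IsTraceClass T) : ‖T‖ ≤ traceNorm T := by
  refine opNorm_le_of_re_inner_le (traceNorm_nonneg T) fun x y hx hy => ?_
  have htr : trH (T * InnerProductSpace.rankOne ℂ x y) = ⟪y, T x⟫_ℂ := by
    rw [trH_eq_tsum, ← (traceBasis H).tsum_inner_mul_inner]
    refine tsum_congr fun i => ?_
    rw [mul_apply_eq_comp, InnerProductSpace.rankOne_apply, map_smul, inner_smul_right]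
  calc RCLike.re ⟪T x, y⟫_ℂ ≤ ‖⟪T x, y⟫_ℂ‖ := RCLike.re_le_norm _
    _ = ‖trH (T * InnerProductSpace.rankOne ℂ x y)‖ := by rw [norm_inner_symm, htr]
    _ ≤ traceNorm T * ‖InnerProductSpace.rankOne ℂ x y‖ := hT.norm_trH_mul_le _
    _ = traceNorm T := by rw [InnerProductSpace.norm_rankOne, hx, hy, mul_one, mul_one]

end IsTraceClass

end

/-! ### Inverses along the imaginary half-line -/

section BanachAlgebra

variable {A : Type*} [NormedRing A] [NormedAlgebra ℂ A] {a b S T : A} {t : ℝ}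

/-- The inverse `(T + it)⁻¹`, with the junk value `0` when `T + it` is not invertible. -/
def shiftInv (T : A) (t : ℝ) : A := Ring.inverse (T + ((t : ℂ) * I) • (1 : A))

/-- Invertibility of `T + it` for all `t ≥ 0`: no spectrum on the negative imaginary axis or at
`0`, which is what the integral defining `log T` needs to converge. -/
def ShiftInvertible (T : A) : Prop := ∀ t : ℝ, 0 ≤ t → IsUnit (T + ((t : ℂ) * I) • (1 : A))

lemma shiftInv_eq_resolvent (T : A) (t : ℝ) : shiftInv T t = resolvent (-T) ((t : ℂ) * I) := by
  rw [shiftInv, resolvent, sub_neg_eq_add, add_comm, Algebra.algebraMap_eq_smul_one]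

lemma shiftInv_zero (T : A) : shiftInv T 0 = Ring.inverse T := by
  simp only [shiftInv, ofReal_zero, zero_mul, zero_smul, add_zero]

lemma shiftInv_sub_shiftInv (hS : IsUnit (S + ((t : ℂ) * I) • (1 : A)))
    (hT : IsUnit (T + ((t : ℂ) * I) • (1 : A))) :
    shiftInv S t - shiftInv T t = shiftInv S t * (T - S) * shiftInv T t := by
  simpa only [shiftInv, add_sub_add_right_eq_sub] using
    Ring.inverse_sub_inverse (iff_of_true hS hT)

lemma one_add_ofReal_mul_I_ne_zero (t : ℝ) : (1 : ℂ) + t * I ≠ 0 := fun h => by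
  simpa using congrArg re h

lemma one_add_add_smul_one (a : A) (z : ℂ) : 1 + a + z • (1 : A) = (1 + z) • (1 : A) + a := by
  rw [add_smul, one_smul]
  abel

variable (A) in
lemma shiftInvertible_one : ShiftInvertible (1 : A) := fun t _ => by
  have h := one_add_add_smul_one (0 : A) (t * I)
  rw [add_zero, add_zero, ← Algebra.algebraMap_eq_smul_one (1 + t * I : ℂ)] at h
  exact h ▸ (one_add_ofReal_mul_I_ne_zero t).isUnit.map _

lemma shiftInv_one (t : ℝ) : shiftInv (1 : A) t = ((1 : ℂ) + t * I)⁻¹ • (1 : A) := by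
  have hadd := one_add_add_smul_one (0 : A) (t * I)
  rw [add_zero, add_zero] at hadd
  have hne := one_add_ofReal_mul_I_ne_zero t
  have hunit : IsUnit (((1 : ℂ) + t * I) • (1 : A)) := isUnit_one.smul (Units.mk0 _ hne)
  rw [shiftInv, hadd, ← mul_one (Ring.inverse _), Ring.inverse_mul_eq_iff_eq_mul _ _ _ hunit,
    smul_mul_smul_comm, mul_inv_cancel₀ hne, one_smul, one_mul]

lemma ShiftInvertible.one_add_mul_comm (h : ShiftInvertible (1 + a * b)) :
    ShiftInvertible (1 + b * a) := by
  intro t ht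
  have key (a b : A) : IsUnit (1 + a * b + ((t : ℂ) * I) • (1 : A)) ↔
      -((1 : ℂ) + t * I) ∉ spectrum ℂ (a * b) := by
    rw [spectrum.notMem_iff, ← IsUnit.neg_iff, one_add_add_smul_one, map_neg, ← neg_add',
      IsUnit.neg_iff, IsUnit.neg_iff, Algebra.algebraMap_eq_smul_one]
  have hne := neg_ne_zero.2 (one_add_ofReal_mul_I_ne_zero t)
  rw [key, ← Units.val_mk0 hne, spectrum.unit_mem_mul_comm, Units.val_mk0, ← key]
  exact h t ht

lemma mul_shiftInv_one_add_mul (ht : IsUnit (1 + a * b + ((t : ℂ) * I) • (1 : A)))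
    (ht' : IsUnit (1 + b * a + ((t : ℂ) * I) • (1 : A))) :
    a * shiftInv (1 + b * a) t = shiftInv (1 + a * b) t * a := by
  refine ((Ring.inverse_mul_eq_iff_eq_mul _ _ _ ht).2 ?_).symm
  rw [← mul_assoc, shiftInv, Ring.eq_mul_inverse_iff_mul_eq _ _ _ ht']
  simp only [mul_add, add_mul, mul_one, one_mul, mul_smul_comm, smul_mul_assoc, mul_assoc]

variable [CompleteSpace A]

lemma hasDerivAt_shiftInv (ht : IsUnit (T + ((t : ℂ) * I) • (1 : A))) :
    HasDerivAt (shiftInv T) (-(I • (shiftInv T t * shiftInv T t))) t := by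
  have hres : (t : ℂ) * I ∈ resolventSet ℂ (-T) := by
    rwa [spectrum.mem_resolventSet_iff, sub_neg_eq_add, add_comm, Algebra.algebraMap_eq_smul_one]
  have hlin : HasDerivAt (fun t : ℝ => (t : ℂ) * I) I t := by
    simpa using (ofRealCLM.hasDerivAt (x := t)).mul_const I
  have h := (spectrum.hasDerivAt_resolvent_const_left hres).scomp t hlin
  rw [smul_neg, sq] at h
  simpa only [Function.comp_def, ← shiftInv_eq_resolvent] using h

lemma shiftInv_isBigO_inv (T : A) : shiftInv T =O[atTop] fun t : ℝ => t⁻¹ := by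
  have htend : Tendsto (fun t : ℝ => (t : ℂ) * I) atTop (Bornology.cobounded ℂ) := by
    rw [← tendsto_norm_atTop_iff_cobounded]
    simpa using tendsto_abs_atTop_atTop
  refine (((spectrum.resolvent_isBigO_inv (-T)).comp_tendsto htend).congr_left fun t =>
    (shiftInv_eq_resolvent T t).symm).trans ?_
  exact Asymptotics.isBigO_of_le _ fun t => by simp

lemma tendsto_shiftInv_zero (T : A) : Tendsto (shiftInv T) atTop (𝓝 0) :=
  (shiftInv_isBigO_inv T).trans_tendsto tendsto_inv_atTop_zero

omit [NormedAlgebra ℂ A] in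
lemma isUnit_and_norm_inverse_le_two_mul {x y : A} (hx : IsUnit x)
    (hxy : ‖y - x‖ * ‖Ring.inverse x‖ ≤ 1 / 2) :
    IsUnit y ∧ ‖Ring.inverse y‖ ≤ 2 * ‖Ring.inverse x‖ := by
  have hy : IsUnit y := by
    have hlt : ‖(x - y) * Ring.inverse x‖ < 1 := by
      rw [norm_sub_rev] at hxy
      linarith [norm_mul_le (x - y) (Ring.inverse x)]
    have hfac : y = (1 - (x - y) * Ring.inverse x) * x := by
      rw [sub_mul, one_mul, Ring.inverse_mul_cancel_right _ _ hx, sub_sub_cancel]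
    exact hfac ▸ (isUnit_one_sub_of_norm_lt_one hlt).mul hx
  refine ⟨hy, ?_⟩
  have hsub := Ring.inverse_sub_inverse (iff_of_true hx hy)
  have hle : ‖Ring.inverse x - Ring.inverse y‖ ≤ 1 / 2 * ‖Ring.inverse y‖ := by
    rw [hsub]
    refine (norm_mul_le _ _).trans (mul_le_mul_of_nonneg_right ?_ (norm_nonneg _))
    exact (norm_mul_le _ _).trans (mul_comm ‖y - x‖ _ ▸ hxy)
  linarith [norm_le_norm_add_norm_sub (Ring.inverse x) (Ring.inverse y)]

namespace ShiftInvertible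

lemma continuousOn_shiftInv (hT : ShiftInvertible T) : ContinuousOn (shiftInv T) (Set.Ici 0) :=
  fun t ht => (hasDerivAt_shiftInv (hT t ht)).continuousAt.continuousWithinAt

lemma exists_norm_shiftInv_le (hT : ShiftInvertible T) :
    ∃ C, ∀ t : ℝ, 0 ≤ t → ‖shiftInv T t‖ ≤ C := by
  obtain ⟨N, hN⟩ := eventually_atTop.1
    ((tendsto_shiftInv_zero T).norm.eventually_le_const (norm_zero.trans_lt one_pos))
  obtain ⟨C, hC⟩ := (isCompact_Icc (a := 0) (b := N)).exists_bound_of_continuousOn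
    (hT.continuousOn_shiftInv.mono Set.Icc_subset_Ici_self)
  refine ⟨max C 1, fun t ht => ?_⟩
  rcases le_total t N with htN | hNt
  · exact (hC t ⟨ht, htN⟩).trans (le_max_left _ _)
  · exact (hN t hNt).trans (le_max_right _ _)

lemma integrableOn_norm_shiftInv_mul (hS : ShiftInvertible S) (hT : ShiftInvertible T) :
    IntegrableOn (fun t => ‖shiftInv S t‖ * ‖shiftInv T t‖) (Set.Ioi 0) := by
  have hloc := (hS.continuousOn_shiftInv.norm.mul hT.continuousOn_shiftInv.norm)
    |>.locallyIntegrableOn (μ := volume) measurableSet_Ici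
  have hint : IntegrableAtFilter (fun t : ℝ => t⁻¹ * t⁻¹) atTop := by
    refine ⟨Set.Ioi 1, Ioi_mem_atTop 1, (integrableOn_Ioi_rpow_of_lt (a := -2) (by norm_num)
      one_pos).congr_fun (fun t ht => ?_) measurableSet_Ioi⟩
    simp only [Real.rpow_neg (zero_le_one.trans ht.le), Real.rpow_two, sq, mul_inv]
  exact (hloc.integrableOn_of_isBigO_atTop
    ((shiftInv_isBigO_inv S).norm_left.mul (shiftInv_isBigO_inv T).norm_left) hint).mono_set
    Set.Ioi_subset_Ici_self

lemma integrableOn_shiftInv_mul (hS : ShiftInvertible S) (hT : ShiftInvertible T) :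
    IntegrableOn (fun t => shiftInv S t * shiftInv T t) (Set.Ioi 0) :=
  (hS.integrableOn_norm_shiftInv_mul hT).mono'
    (((hS.continuousOn_shiftInv.mul hT.continuousOn_shiftInv).mono
      Set.Ioi_subset_Ici_self).aestronglyMeasurable measurableSet_Ioi)
    (.of_forall fun _ => norm_mul_le _ _)

protected lemma eventually (hT : ShiftInvertible T) :
    ∀ᶠ S in 𝓝 T, ShiftInvertible S ∧ ∀ t : ℝ, 0 ≤ t → ‖shiftInv S t‖ ≤ 2 * ‖shiftInv T t‖ := by
  obtain ⟨C, hC⟩ := hT.exists_norm_shiftInv_le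
  have hlim : Tendsto (fun S => ‖S - T‖ * C) (𝓝 T) (𝓝 0) := by
    have hcont : Continuous fun S : A => ‖S - T‖ * C := by fun_prop
    simpa only [sub_self, norm_zero, zero_mul] using hcont.tendsto T
  filter_upwards [hlim.eventually_le_const one_half_pos] with S hS
  have key (t : ℝ) (ht : 0 ≤ t) := isUnit_and_norm_inverse_le_two_mul (hT t ht)
    (y := S + ((t : ℂ) * I) • (1 : A)) (by
      rw [add_sub_add_right_eq_sub]
      exact (mul_le_mul_of_nonneg_left (hC t ht) (norm_nonneg _)).trans hS)
  exact ⟨fun t ht => (key t ht).1, fun t ht => (key t ht).2⟩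

end ShiftInvertible

/-- The divided difference `(log S - log T) / (S - T)` of the logarithm, as
`i ∫₀^∞ (S + it)⁻¹ (T + it)⁻¹ dt`. -/
def logDividedDiff (S T : A) : A := I • ∫ t in Set.Ioi (0 : ℝ), shiftInv S t * shiftInv T t

lemma logDividedDiff_self (hT : ShiftInvertible T) : logDividedDiff T T = Ring.inverse T := by
  have hderiv (t : ℝ) (ht : t ∈ Set.Ici (0 : ℝ)) :
      HasDerivAt (-shiftInv T) (I • (shiftInv T t * shiftInv T t)) t := by
    simpa only [neg_neg] using (hasDerivAt_shiftInv (hT t ht)).neg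
  have h := integral_Ioi_of_hasDerivAt_of_tendsto
    (hderiv 0 Set.self_mem_Ici).continuousAt.continuousWithinAt
    (fun t ht => hderiv t (Set.Ioi_subset_Ici_self ht))
    ((hT.integrableOn_shiftInv_mul hT).smul I)
    (tendsto_shiftInv_zero T).neg
  rw [logDividedDiff, ← integral_smul, h, Pi.neg_apply, shiftInv_zero, neg_zero, zero_sub, neg_neg]

lemma continuousAt_logDividedDiff (hT : ShiftInvertible T) :
    ContinuousAt (logDividedDiff T) T := by
  refine (continuousAt_of_dominated (bound := fun t => 2 * (‖shiftInv T t‖ * ‖shiftInv T t‖))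
    ?_ ?_ ((hT.integrableOn_norm_shiftInv_mul hT).const_mul 2) ?_).const_smul I
  · filter_upwards [hT.eventually] with S hS
    exact (hT.integrableOn_shiftInv_mul hS.1).aestronglyMeasurable
  · filter_upwards [hT.eventually] with S hS
    filter_upwards [ae_restrict_mem measurableSet_Ioi] with t ht
    rw [mul_left_comm]
    exact norm_mul_le_of_le le_rfl (hS.2 t (Set.Ioi_subset_Ici_self ht))
  · filter_upwards [ae_restrict_mem measurableSet_Ioi] with t ht
    obtain ⟨u, hu⟩ := hT t (Set.Ioi_subset_Ici_self ht)
    have hinv : ContinuousAt Ring.inverse (T + ((t : ℂ) * I) • (1 : A)) :=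
      hu ▸ NormedRing.inverse_continuousAt u
    exact continuousAt_const.mul (ContinuousAt.comp (f := fun S => S + ((t : ℂ) * I) • (1 : A))
      hinv (continuous_id.add continuous_const).continuousAt)

end BanachAlgebra

/-! ### The trace of the logarithm -/

section

variable {A B C₁ C₂ S T V' : H →L[ℂ] H} {V : ℝ → H →L[ℂ] H} {s t : ℝ}

lemma logIntegrand_one_add_mul (ht : 0 ≤ t) (h : ShiftInvertible (1 + B * A)) :
    logIntegrand (1 + A * B) t = -(A * (shiftInv 1 t * shiftInv (1 + B * A) t) * B) := by
  have hunit := h.one_add_mul_comm t ht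
  calc logIntegrand (1 + A * B) t = shiftInv (1 + A * B) t - shiftInv 1 t := by
        rw [shiftInv_one]
        rfl
    _ = -(shiftInv (1 + A * B) t * A * B * shiftInv 1 t) := by
        rw [shiftInv_sub_shiftInv hunit (shiftInvertible_one _ t ht)]
        noncomm_ring
    _ = -(A * (shiftInv 1 t * shiftInv (1 + B * A) t) * B) := by
        rw [← mul_shiftInv_one_add_mul hunit (h t ht), shiftInv_one]
        simp only [smul_mul_assoc, mul_smul_comm, one_mul, mul_one, mul_assoc]

lemma opLog_one_add_mul (h : ShiftInvertible (1 + B * A)) :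
    opLog (1 + A * B) = A * logDividedDiff 1 (1 + B * A) * B := by
  have hint := (shiftInvertible_one _).integrableOn_shiftInv_mul h
  have heq : Set.EqOn (logIntegrand (1 + A * B))
      (fun t => -mulLeftRight ℂ _ A B (shiftInv 1 t * shiftInv (1 + B * A) t)) (Set.Ioi 0) :=
    fun t ht => logIntegrand_one_add_mul (Set.Ioi_subset_Ici_self ht) h
  have hlog : IntegrableOn (logIntegrand (1 + A * B)) (Set.Ioi 0) :=
    IntegrableOn.congr_fun ((mulLeftRight ℂ _ A B).integrable_comp hint).neg heq.symm
      measurableSet_Ioi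
  have hlim : opLog (1 + A * B) = -I • ∫ t in Set.Ioi (0 : ℝ), logIntegrand (1 + A * B) t :=
    ((intervalIntegral_tendsto_integral_Ioi 0 hlog tendsto_id).const_smul (-I)).limUnder_eq
  rw [hlim, setIntegral_congr_fun measurableSet_Ioi heq, integral_neg,
    ContinuousLinearMap.integral_comp_comm _ hint, mulLeftRight_apply, neg_smul_neg,
    logDividedDiff, mul_smul_comm, smul_mul_assoc]

lemma trH_opLog_one_add_mul (hA : IsHilbertSchmidt A) (hB : IsHilbertSchmidt B)
    (h : ShiftInvertible (1 + B * A)) :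
    trH (opLog (1 + A * B)) = trH (B * A * logDividedDiff 1 (1 + B * A)) := by
  rw [opLog_one_add_mul h, (hA.mul_right _).trH_mul_comm hB, mul_assoc]

namespace IsTraceClass

lemma trH_mul_logDividedDiff (hA : IsTraceClass A) (hS : ShiftInvertible S)
    (hT : ShiftInvertible T) : trH (A * logDividedDiff S T) =
      I * ∫ t in Set.Ioi (0 : ℝ), trH (A * (shiftInv S t * shiftInv T t)) := by
  rw [logDividedDiff, mul_smul_comm, trH_smul, ← hA.traceFunctional_apply,
    ← ContinuousLinearMap.integral_comp_comm _ (hS.integrableOn_shiftInv_mul hT)]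
  rfl

lemma integrableOn_trH_mul_shiftInv_mul (hA : IsTraceClass A) (hS : ShiftInvertible S)
    (hT : ShiftInvertible T) :
    IntegrableOn (fun t => trH (A * (shiftInv S t * shiftInv T t))) (Set.Ioi 0) :=
  hA.traceFunctional.integrable_comp (hS.integrableOn_shiftInv_mul hT)

lemma trH_mul_logDividedDiff_sub (hC₁ : IsTraceClass C₁) (hC₂ : IsTraceClass C₂)
    (h₁ : ShiftInvertible (1 + C₁)) (h₂ : ShiftInvertible (1 + C₂)) :
    trH (C₂ * logDividedDiff 1 (1 + C₂)) - trH (C₁ * logDividedDiff 1 (1 + C₁)) =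
      trH ((C₂ - C₁) * logDividedDiff (1 + C₁) (1 + C₂)) := by
  have hone := shiftInvertible_one (H →L[ℂ] H)
  have hresolvent {C : H →L[ℂ] H} (h : ShiftInvertible (1 + C)) (t : ℝ) (ht : 0 ≤ t) :
      C * (shiftInv 1 t * shiftInv (1 + C) t) = shiftInv 1 t - shiftInv (1 + C) t := by
    rw [shiftInv_sub_shiftInv (hone t ht) (h t ht), add_sub_cancel_left, shiftInv_one]
    simp only [smul_mul_assoc, mul_smul_comm, one_mul]
  rw [hC₁.trH_mul_logDividedDiff hone h₁, hC₂.trH_mul_logDividedDiff hone h₂,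
    (hC₂.sub hC₁).trH_mul_logDividedDiff h₁ h₂, ← mul_sub,
    ← integral_sub (hC₂.integrableOn_trH_mul_shiftInv_mul hone h₂)
      (hC₁.integrableOn_trH_mul_shiftInv_mul hone h₁)]
  congr 1
  refine setIntegral_congr_fun measurableSet_Ioi fun t ht => ?_
  have ht' : 0 ≤ t := Set.Ioi_subset_Ici_self ht
  have hswap := shiftInv_sub_shiftInv (h₂ t ht') (h₁ t ht')
  calc trH (C₂ * (shiftInv 1 t * shiftInv (1 + C₂) t)) -
        trH (C₁ * (shiftInv 1 t * shiftInv (1 + C₁) t))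
      = trH (-(shiftInv (1 + C₂) t - shiftInv (1 + C₁) t)) := by
        rw [← trH_sub (hC₂.mul_right _) (hC₁.mul_right _), hresolvent h₁ t ht',
          hresolvent h₂ t ht', sub_sub_sub_cancel_left, neg_sub]
    _ = trH (shiftInv (1 + C₂) t * ((C₂ - C₁) * shiftInv (1 + C₁) t)) := by
        rw [hswap, add_sub_add_left_eq_sub, ← neg_sub C₂ C₁, mul_neg, neg_mul, neg_neg, mul_assoc]
    _ = trH ((C₂ - C₁) * (shiftInv (1 + C₁) t * shiftInv (1 + C₂) t)) := by
        rw [← ((hC₂.sub hC₁).mul_right _).trH_mul_comm, mul_assoc]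

end IsTraceClass

/-! ### Trace-norm derivatives -/

/-- `V'` is the derivative of `V` at `s` in trace norm. -/
def HasTraceNormDerivAt (V : ℝ → H →L[ℂ] H) (V' : H →L[ℂ] H) (s : ℝ) : Prop :=
  Tendsto (fun h : ℝ => traceNorm ((h : ℂ)⁻¹ • (V (s + h) - V s) - V')) (𝓝[≠] 0) (𝓝 0)

lemma eventually_nhdsNE_zero_add {p : ℝ → Prop} (h : ∀ᶠ t in 𝓝 s, p t) :
    ∀ᶠ h in 𝓝[≠] (0 : ℝ), p (s + h) := by
  have hlim : Tendsto (fun h : ℝ => s + h) (𝓝[≠] (0 : ℝ)) (𝓝 s) :=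
    ((continuous_const_add s).tendsto' 0 s (add_zero s)).mono_left nhdsWithin_le_nhds
  exact hlim.eventually h

omit [CompleteSpace H] in
lemma eventually_isTraceClass_slope_sub (hV : ∀ᶠ t in 𝓝 s, IsTraceClass (V t))
    (hV' : IsTraceClass V') :
    ∀ᶠ h : ℝ in 𝓝[≠] 0, IsTraceClass ((h : ℂ)⁻¹ • (V (s + h) - V s) - V') :=
  (eventually_nhdsNE_zero_add hV).mono fun _ hh =>
    ((hh.sub hV.self_of_nhds).smul _).sub hV'

namespace HasTraceNormDerivAt

lemma mul_left (h : HasTraceNormDerivAt V V' s) (hV : ∀ᶠ t in 𝓝 s, IsTraceClass (V t))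
    (hV' : IsTraceClass V') (N : H →L[ℂ] H) :
    HasTraceNormDerivAt (fun t => N * V t) (N * V') s := by
  have hlim := h.const_mul ‖N‖
  rw [mul_zero] at hlim
  refine squeeze_zero' (.of_forall fun _ => traceNorm_nonneg _) ?_ hlim
  filter_upwards [eventually_isTraceClass_slope_sub hV hV'] with t ht
  rw [← mul_sub, ← mul_smul_comm, ← mul_sub]
  exact ht.traceNorm_mul_le N

lemma hasDerivAt (h : HasTraceNormDerivAt V V' s) (hV : ∀ᶠ t in 𝓝 s, IsTraceClass (V t))
    (hV' : IsTraceClass V') : HasDerivAt V V' s := by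
  rw [hasDerivAt_iff_tendsto_slope_zero, tendsto_iff_norm_sub_tendsto_zero]
  refine squeeze_zero' (.of_forall fun _ => norm_nonneg _) ?_ h
  filter_upwards [eventually_isTraceClass_slope_sub hV hV'] with t ht
  rw [← Complex.coe_smul, ofReal_inv]
  exact ht.norm_le_traceNorm

lemma tendsto_trH_slope_mul (h : HasTraceNormDerivAt V V' s)
    (hV : ∀ᶠ t in 𝓝 s, IsTraceClass (V t)) (hV' : IsTraceClass V') {Q : ℝ → H →L[ℂ] H}
    {Q₀ : H →L[ℂ] H} (hQ : Tendsto Q (𝓝 s) (𝓝 Q₀)) :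
    Tendsto (fun h : ℝ => h⁻¹ • trH ((V (s + h) - V s) * Q (s + h))) (𝓝[≠] 0)
      (𝓝 (trH (V' * Q₀))) := by
  have hQ' : Tendsto (fun h => Q (s + h)) (𝓝[≠] (0 : ℝ)) (𝓝 Q₀) :=
    fun _ hU => eventually_nhdsNE_zero_add (hQ hU)
  have hmain := (hV'.traceFunctional.continuous.tendsto Q₀).comp hQ'
  have hrem : Tendsto (fun h : ℝ => trH (((h : ℂ)⁻¹ • (V (s + h) - V s) - V') * Q (s + h)))
      (𝓝[≠] 0) (𝓝 0) := by
    have hlim := h.mul hQ'.norm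
    rw [zero_mul] at hlim
    refine squeeze_zero_norm' ?_ hlim
    exact (eventually_isTraceClass_slope_sub hV hV').mono fun t ht => ht.norm_trH_mul_le _
  have hsum := hrem.add hmain
  rw [zero_add] at hsum
  refine hsum.congr' ?_
  filter_upwards [eventually_isTraceClass_slope_sub hV hV'] with t ht
  rw [Function.comp_apply, hV'.traceFunctional_apply,
    ← trH_add (ht.mul_right _) (hV'.mul_right _), ← add_mul, sub_add_cancel, smul_mul_assoc,
    trH_smul, ← ofReal_inv, Complex.real_smul]

end HasTraceNormDerivAt

theorem hasDerivAt_trH_opLog_one_add_mul {A B : ℝ → H →L[ℂ] H} {C' : H →L[ℂ] H}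
    (hA : ∀ᶠ t in 𝓝 s, IsHilbertSchmidt (A t)) (hB : ∀ᶠ t in 𝓝 s, IsHilbertSchmidt (B t))
    (hC' : IsTraceClass C') (hderiv : HasTraceNormDerivAt (fun t => B t * A t) C' s)
    (hinv : ShiftInvertible (1 + B s * A s)) :
    HasDerivAt (fun t => trH (opLog (1 + A t * B t)))
      (trH (C' * Ring.inverse (1 + B s * A s))) s := by
  have hC : ∀ᶠ t in 𝓝 s, IsTraceClass (B t * A t) := by
    filter_upwards [hA, hB] with t hAt hBt using hBt.isTraceClass_mul hAt
  have hcont : ContinuousAt (fun t => 1 + B t * A t) s :=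
    continuousAt_const.add (hderiv.hasDerivAt hC hC').continuousAt
  have hQ : Tendsto (fun t => logDividedDiff (1 + B s * A s) (1 + B t * A t)) (𝓝 s)
      (𝓝 (Ring.inverse (1 + B s * A s))) := by
    rw [← logDividedDiff_self hinv]
    exact (continuousAt_logDividedDiff hinv).tendsto.comp hcont
  have hinv' : ∀ᶠ t in 𝓝 s, ShiftInvertible (1 + B t * A t) :=
    hcont.eventually (hinv.eventually.mono fun _ h => h.1)
  rw [hasDerivAt_iff_tendsto_slope_zero]
  refine (hderiv.tendsto_trH_slope_mul hC hC' hQ).congr' ?_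
  filter_upwards [eventually_nhdsNE_zero_add (hA.and (hB.and (hC.and hinv')))]
    with h ⟨hAh, hBh, hCh, hinvh⟩
  rw [trH_opLog_one_add_mul hAh hBh hinvh,
    trH_opLog_one_add_mul hA.self_of_nhds hB.self_of_nhds hinv,
    hC.self_of_nhds.trH_mul_logDividedDiff_sub hCh hinv hinvh]

end

/-! ### Dissipative operators and resolvents -/

section

variable {K R T : H →L[ℂ] H} {z : ℂ}

/-- Dissipativity of a bounded operator: `Im ⟪x, T x⟫ ≥ 0` for all `x`. -/
def IsDissipative (T : H →L[ℂ] H) : Prop := ∀ x, 0 ≤ (⟪x, T x⟫_ℂ).im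

namespace IsDissipative

omit [CompleteSpace H] in
lemma one_add (hT : IsDissipative T) : IsDissipative (1 + T) := fun x => by
  have hself : (⟪x, x⟫_ℂ).im = 0 := inner_self_im (𝕜 := ℂ) x
  rw [_root_.add_apply, one_apply_eq_self, inner_add_right, add_im, hself, zero_add]
  exact hT x

lemma adjoint_mul_mul (hT : IsDissipative T) (K : H →L[ℂ] H) :
    IsDissipative (adjoint K * T * K) := fun x => by
  rw [mul_assoc, mul_apply_eq_comp, adjoint_inner_right]
  exact hT (K x)

lemma shiftInvertible (hT : IsDissipative T) (hunit : IsUnit T) : ShiftInvertible T := by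
  intro t ht
  rcases ht.eq_or_lt with rfl | hpos
  · simpa only [ofReal_zero, zero_mul, zero_smul, add_zero] using hunit
  refine isUnit_of_forall_le_norm_inner_map _ (c := ⟨t, ht⟩) hpos fun x => ?_
  have him : (⟪x, (T + ((t : ℂ) * I) • 1) x⟫_ℂ).im = (⟪x, T x⟫_ℂ).im + ‖x‖ ^ 2 * t := by
    have hnorm : ⟪x, x⟫_ℂ = ((‖x‖ ^ 2 : ℝ) : ℂ) := by simp [inner_self_eq_norm_sq_to_K]
    rw [_root_.add_apply, _root_.smul_apply, one_apply_eq_self, inner_add_right,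
      inner_smul_right, hnorm, add_im, im_mul_ofReal]
    simp [mul_comm]
  calc ‖x‖ ^ 2 * t ≤ (⟪x, (T + ((t : ℂ) * I) • 1) x⟫_ℂ).im := by
        rw [him]
        exact le_add_of_nonneg_left (hT x)
    _ ≤ ‖⟪x, (T + ((t : ℂ) * I) • 1) x⟫_ℂ‖ := (le_abs_self _).trans (abs_im_le_norm _)
    _ = ‖⟪(T + ((t : ℂ) * I) • 1) x, x⟫_ℂ‖ := norm_inner_symm _ _

end IsDissipative

namespace SelfAdjointOp

lemma adjoint_resolvent (A : SelfAdjointOp H) (hz : z.im ≠ 0) :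
    adjoint (A.resolvent z) = A.resolvent (starRingEnd ℂ z) := by
  have hz' : (starRingEnd ℂ z).im ≠ 0 := by rwa [conj_im, neg_ne_zero]
  refine ((eq_adjoint_iff _ _).2 fun y x => ?_).symm
  have hsymm := A.symmetric ⟨_, A.resolvent_mem hz' y⟩ ⟨_, A.resolvent_mem hz x⟩
  conv_lhs => rw [← A.op_resolvent hz x]
  conv_rhs => rw [← A.op_resolvent hz' y]
  rw [inner_sub_right, inner_sub_left, hsymm, inner_smul_left, inner_smul_right, conj_conj]

lemma isDissipative_resolvent (A : SelfAdjointOp H) (hz : 0 < z.im) :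
    IsDissipative (A.resolvent z) := fun x => by
  set u : A.dom := ⟨_, A.resolvent_mem hz.ne' x⟩
  have hreal : (⟪A.op u, (u : H)⟫_ℂ).im = 0 := by
    rw [← conj_eq_iff_im, inner_conj_symm, A.symmetric]
  have hnorm : ⟪(u : H), (u : H)⟫_ℂ = ((‖(u : H)‖ ^ 2 : ℝ) : ℂ) := by
    simp [inner_self_eq_norm_sq_to_K]
  calc 0 ≤ z.im * ‖(u : H)‖ ^ 2 := by positivity
    _ = (⟪A.op u - z • (u : H), (u : H)⟫_ℂ).im := by
        rw [inner_sub_left, inner_smul_left, hnorm, sub_im, hreal, im_mul_ofReal, conj_im]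
        ring
    _ = (⟪x, A.resolvent z x⟫_ℂ).im := by rw [A.op_resolvent hz.ne' x]

end SelfAdjointOp

namespace IsSumOf

variable {B A : SelfAdjointOp H} {V : H →L[ℂ] H}

lemma resolvent_eq_add (h : IsSumOf B A V) (hz : z.im ≠ 0) :
    A.resolvent z = B.resolvent z + A.resolvent z * V * B.resolvent z := by
  ext x
  have hmem : B.resolvent z x ∈ A.dom := h.1 ▸ B.resolvent_mem hz x
  have hsub : A.op ⟨_, hmem⟩ - z • B.resolvent z x = x - V (B.resolvent z x) := by
    rw [eq_sub_iff_add_eq, sub_add_eq_add_sub, ← h.2 _ (B.resolvent_mem hz x), B.op_resolvent hz]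
  have hinv := A.resolvent_op hz ⟨_, hmem⟩
  rw [hsub, map_sub] at hinv
  exact eq_add_of_sub_eq hinv

lemma resolvent_eq_add' (h : IsSumOf B A V) (hz : z.im ≠ 0) :
    A.resolvent z = B.resolvent z + B.resolvent z * V * A.resolvent z := by
  ext x
  have hmem : A.resolvent z x ∈ B.dom := h.1.symm ▸ A.resolvent_mem hz x
  have hadd : B.op ⟨_, hmem⟩ - z • A.resolvent z x = x + V (A.resolvent z x) := by
    rw [h.2 _ hmem (A.resolvent_mem hz x), add_sub_right_comm, A.op_resolvent hz]
  have hinv := B.resolvent_op hz ⟨_, hmem⟩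
  rw [hadd, map_add] at hinv
  exact hinv.symm

lemma isUnit_one_add_resolvent_mul (h : IsSumOf B A V) (hz : z.im ≠ 0) :
    IsUnit (1 + A.resolvent z * V) := by
  refine ⟨⟨1 + A.resolvent z * V, 1 - B.resolvent z * V, ?_, ?_⟩, rfl⟩
  · calc (1 + A.resolvent z * V) * (1 - B.resolvent z * V)
        = 1 + (A.resolvent z - (B.resolvent z + A.resolvent z * V * B.resolvent z)) * V := by
          noncomm_ring
      _ = 1 := by rw [← h.resolvent_eq_add hz, sub_self, zero_mul, add_zero]
  · calc (1 - B.resolvent z * V) * (1 + A.resolvent z * V)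
        = 1 + (A.resolvent z - (B.resolvent z + B.resolvent z * V * A.resolvent z)) * V := by
          noncomm_ring
      _ = 1 := by rw [← h.resolvent_eq_add' hz, sub_self, zero_mul, add_zero]

lemma inverse_mul_resolvent (h : IsSumOf B A V) (hz : z.im ≠ 0) :
    Ring.inverse (1 + A.resolvent z * V) * A.resolvent z = B.resolvent z := by
  rw [Ring.inverse_mul_eq_iff_eq_mul _ _ _ (h.isUnit_one_add_resolvent_mul hz), add_mul, one_mul]
  exact h.resolvent_eq_add hz

lemma isUnit_one_add_adjoint_mul_resolvent_mul (h : IsSumOf B A (K * adjoint K))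
    (hz : z.im ≠ 0) : IsUnit (1 + adjoint K * A.resolvent z * K) := by
  refine ⟨⟨_, 1 - adjoint K * B.resolvent z * K, ?_, ?_⟩, rfl⟩
  · calc _ = 1 + adjoint K * (A.resolvent z - (B.resolvent z +
          A.resolvent z * (K * adjoint K) * B.resolvent z)) * K := by noncomm_ring
      _ = 1 := by rw [← h.resolvent_eq_add hz, sub_self, mul_zero, zero_mul, add_zero]
  · calc _ = 1 + adjoint K * (A.resolvent z - (B.resolvent z +
          B.resolvent z * (K * adjoint K) * A.resolvent z)) * K := by noncomm_ring
      _ = 1 := by rw [← h.resolvent_eq_add' hz, sub_self, mul_zero, zero_mul, add_zero]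

lemma shiftInvertible_one_add_resolvent_mul (h : IsSumOf B A (K * adjoint K)) (hz : 0 < z.im) :
    ShiftInvertible (1 + A.resolvent z * K * adjoint K) := by
  refine ShiftInvertible.one_add_mul_comm ?_
  rw [← mul_assoc]
  exact ((A.isDissipative_resolvent hz).adjoint_mul_mul K).one_add.shiftInvertible
    (h.isUnit_one_add_adjoint_mul_resolvent_mul hz.ne')

end IsSumOf

end

/-! ### Differentiation of `tr log Φ` -/

section

variable {H0 Hs : SelfAdjointOp H} {K : ℝ → H →L[ℂ] H} {V' : H →L[ℂ] H} {s : ℝ} {z : ℂ}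

lemma hasDerivAt_trH_opLog_phi (hV : ∀ᶠ t in 𝓝 s, IsTraceClass (K t * adjoint (K t)))
    (hHs : IsSumOf Hs H0 (K s * adjoint (K s))) (hV' : IsTraceClass V')
    (hderiv : HasTraceNormDerivAt (fun t => K t * adjoint (K t)) V' s) (hz : 0 < z.im) :
    HasDerivAt (fun t => trH (opLog (1 + adjoint (K t) * H0.resolvent z * K t)))
      (trH (V' * Hs.resolvent z)) s := by
  have hK : ∀ᶠ t in 𝓝 s, IsHilbertSchmidt (K t) :=
    hV.mono fun _ => isHilbertSchmidt_of_isTraceClass_mul_adjoint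
  have hRV := hderiv.mul_left hV hV' (H0.resolvent z)
  simp only [← mul_assoc] at hRV
  have h := hasDerivAt_trH_opLog_one_add_mul (hK.mono fun _ hKt => hKt.adjoint)
    (hK.mono fun _ hKt => hKt.mul_left (H0.resolvent z)) (hV'.mul_left _) hRV
    (hHs.shiftInvertible_one_add_resolvent_mul hz)
  simp only [← mul_assoc] at h
  convert h using 1
  rw [mul_assoc, mul_assoc, ← (hV'.mul_right _).trH_mul_comm, mul_assoc,
    hHs.inverse_mul_resolvent hz.ne']

lemma HasTraceNormDerivAt.isSelfAdjoint {V : ℝ → H →L[ℂ] H} (h : HasTraceNormDerivAt V V' s)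
    (hV : ∀ᶠ t in 𝓝 s, IsTraceClass (V t)) (hV' : IsTraceClass V')
    (hsa : ∀ t, IsSelfAdjoint (V t)) : IsSelfAdjoint V' := by
  have hd := h.hasDerivAt hV hV'
  have hstar := hd.star
  simp only [(hsa _).star_eq] at hstar
  exact hstar.unique hd

lemma adjoint_phi (A : SelfAdjointOp H) (K : H →L[ℂ] H) (hz : z.im ≠ 0) :
    adjoint (1 + adjoint K * A.resolvent z * K) =
      1 + adjoint K * A.resolvent (starRingEnd ℂ z) * K := by
  rw [← A.adjoint_resolvent hz]
  simp only [← star_eq_adjoint, star_add, star_one, star_mul, star_star, mul_assoc]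

lemma IsTraceClass.conj_trH_mul_resolvent {T : H →L[ℂ] H} (hT : IsTraceClass T)
    (hsa : IsSelfAdjoint T) (A : SelfAdjointOp H) (hz : z.im ≠ 0) :
    starRingEnd ℂ (trH (T * A.resolvent (starRingEnd ℂ z))) = trH (T * A.resolvent z) := by
  rw [← A.adjoint_resolvent hz, ← trH_adjoint, ← star_eq_adjoint, ← star_eq_adjoint, star_mul,
    star_star, hsa.star_eq, hT.trH_mul_comm]

theorem deriv_trace_log_phi_general (hV : ∀ᶠ t in 𝓝 s, IsTraceClass (K t * adjoint (K t)))
    (hHs : IsSumOf Hs H0 (K s * adjoint (K s))) (hV' : IsTraceClass V')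
    (hderiv : HasTraceNormDerivAt (fun t => K t * adjoint (K t)) V' s) (hz : z.im ≠ 0) :
    HasDerivAt (fun t => trH (logHerg (fun w => 1 + adjoint (K t) * H0.resolvent w * K t) z))
      (trH (V' * Hs.resolvent z)) s := by
  rcases lt_or_gt_of_ne hz with hneg | hpos
  · have hsa := hderiv.isSelfAdjoint hV hV' fun t => IsSelfAdjoint.mul_star_self (K t)
    have hconj : 0 < (starRingEnd ℂ z).im := by rwa [conj_im, neg_pos]
    have h := Complex.conjCLE.toContinuousLinearMap.hasFDerivAt.comp_hasDerivAt s
      (hasDerivAt_trH_opLog_phi hV hHs hV' hderiv hconj)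
    rw [← hV'.conj_trH_mul_resolvent hsa Hs hz]
    simp only [logHerg, if_neg hneg.not_gt, opLogAnti, adjoint_phi H0 _ hz, trH_adjoint]
    exact h
  · simpa only [logHerg, if_pos hpos] using hasDerivAt_trH_opLog_phi hV hHs hV' hderiv hpos

end

/-- Lemma 4.2: for a trace-norm `C¹` family of nonnegative perturbations
`V(s) = K(s)K(s)*`, `d/ds tr log Φ(z,s) = tr (V'(s)(H(s)-z)⁻¹)` for `s ∈ Ω`,
`z ∈ ℂ∖ℝ`. -/
theorem deriv_trace_log_phi [SeparableSpace H]
    (H0 : SelfAdjointOp H) (Ω : Set ℝ) (hΩo : IsOpen Ω) (hΩc : Ω.OrdConnected)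
    (K : ℝ → H →L[ℂ] H) (Hs : ℝ → SelfAdjointOp H) (V' : ℝ → H →L[ℂ] H)
    (hV : ∀ s ∈ Ω, IsTraceClass (K s * ContinuousLinearMap.adjoint (K s)))
    (hHs : ∀ s ∈ Ω, IsSumOf (Hs s) H0 (K s * ContinuousLinearMap.adjoint (K s)))
    (hV' : ∀ s ∈ Ω, IsTraceClass (V' s) ∧
      Tendsto (fun h : ℝ => traceNorm (((h : ℂ))⁻¹ •
          (K (s + h) * ContinuousLinearMap.adjoint (K (s + h)) -
            K s * ContinuousLinearMap.adjoint (K s)) - V' s))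
        (𝓝[≠] (0 : ℝ)) (𝓝 0))
    (hV'cont : ∀ s ∈ Ω,
      Tendsto (fun t : ℝ => traceNorm (V' t - V' s)) (𝓝[Ω] s) (𝓝 0)) :
    ∀ s ∈ Ω, ∀ z : ℂ, z.im ≠ 0 →
      HasDerivAt (fun t : ℝ => trH (logHerg
          (fun w => 1 + ContinuousLinearMap.adjoint (K t) * H0.resolvent w * K t) z))
        (trH (V' s * (Hs s).resolvent z)) s := by
  intro s hs z hz
  exact deriv_trace_log_phi_general ((hΩo.eventually_mem hs).mono hV) (hHs s hs) (hV' s hs).1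
    (hV' s hs).2 hz

end SpectralShift
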